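/- arXiv:1205.4821 — 2 statements merged into one kernel-verified Lean document; each statement's English description precedes it below -/
import Mathlib

section
/- If E ⊆ ℝ is any set such that the sumset 𝒞 + E contains the interval [0,2], then the Hausdorff dimension of E is at least 1 − log 2/log 3. -/
open scoped Pointwise

/-- The middle-thirds Cantor set: reals admitting a ternary expansion
`∑_{n≥1} aₙ 3⁻ⁿ` with every digit `aₙ ∈ {0, 2}`. -/
def ternaryCantorSet : Set ℝ :=
  {x | ∃ a : ℕ → ℝ, (∀ n, a n = 0 ∨ a n = 2) ∧ x = ∑' n : ℕ, a n / 3 ^ (n + 1)}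

/-!
The Cantor set is covered by `2 ^ n` balls of radius `3 ^ (-n)`, so it is covered by
`O(r ^ (-s))` balls of radius `r`, where `s = log 2 / log 3`. If `S` has diameter at most `r`, the
sumset `𝒞 + S` is then covered by `O(r ^ (-s))` balls of radius `2 r`, and its Lebesgue measure is
`O(r ^ (1 - s))`. Hence the outer measure `S ↦ |𝒞 + S|` is dominated by a multiple of the Hausdorff
measure `μH[1 - s]`, which therefore cannot vanish on `E` when `𝒞 + E` has positive measure.
-/

open MeasureTheory Metric Module Filter Topology
open scoped NNReal ENNReal

section CoveringNumber

variable {X Y : Type*} [PseudoEMetricSpace X] [PseudoEMetricSpace Y]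

theorem exists_isCover_encard_eq_externalCoveringNumber (ε : ℝ≥0) (A : Set X) :
    ∃ C : Set X, IsCover ε A C ∧ C.encard = externalCoveringNumber ε A := by
  have : Nonempty {C : Set X // IsCover ε A C} := ⟨⟨A, .rfl⟩⟩
  obtain ⟨⟨C, hC⟩, hcard⟩ :=
    ENat.exists_eq_iInf fun C : {C : Set X // IsCover ε A C} ↦ C.1.encard
  exact ⟨C, hC, by rw [hcard, externalCoveringNumber, iInf_subtype]⟩

theorem externalCoveringNumber_union_le (ε : ℝ≥0) (A B : Set X) :
    externalCoveringNumber ε (A ∪ B) ≤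
      externalCoveringNumber ε A + externalCoveringNumber ε B := by
  obtain ⟨C, hC, hcardC⟩ := exists_isCover_encard_eq_externalCoveringNumber ε A
  obtain ⟨D, hD, hcardD⟩ := exists_isCover_encard_eq_externalCoveringNumber ε B
  have hCD : IsCover ε (A ∪ B) (C ∪ D) := by
    rintro x (hx | hx)
    · exact hC.mono Set.subset_union_left hx
    · exact hD.mono Set.subset_union_right hx
  rw [← hcardC, ← hcardD]
  exact hCD.externalCoveringNumber_le_encard.trans (Set.encard_union_le C D)

theorem externalCoveringNumber_image_le {f : X → Y} {K : ℝ≥0} (hf : LipschitzWith K f) (ε : ℝ≥0)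
    (A : Set X) : externalCoveringNumber (K * ε) (f '' A) ≤ externalCoveringNumber ε A := by
  obtain ⟨C, hC, hcard⟩ := exists_isCover_encard_eq_externalCoveringNumber ε A
  rw [← hcard]
  exact (hC.image_lipschitz hf).externalCoveringNumber_le_encard.trans (Set.encard_image_le f C)

end CoveringNumber

section CoveringGrowth

variable {X : Type*} [PseudoEMetricSpace X] {A : Set X}

/-- The set `A` can be covered by `K * r ^ (-s)` closed balls of every radius `r ∈ (0, 1]`: a
quantitative form of `A` having upper box dimension at most `s`. Radii above `1` are left free since
a nonempty set needs a ball however large `r` is. The centers need not lie in `A`. -/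
def HasCoveringGrowth (A : Set X) (K : ℝ≥0) (s : ℝ) : Prop :=
  ∀ ⦃r : ℝ≥0⦄, 0 < r → r ≤ 1 → (externalCoveringNumber r A : ℝ≥0∞) ≤ K * (r : ℝ≥0∞) ^ (-s)

theorem hasCoveringGrowth_of_forall_pow {m : ℕ} {b : ℝ≥0} (hm : m ≠ 0) (hb : 1 < b)
    (hA : ∀ n, externalCoveringNumber (b⁻¹ ^ n) A ≤ m ^ n) :
    HasCoveringGrowth A m (Real.log m / Real.log b) := by
  intro r hr hr1
  set s := Real.log m / Real.log b with hs
  have hb0 : 0 < b := one_pos.trans hb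
  have hs0 : 0 ≤ s := div_nonneg (Real.log_natCast_nonneg m) (Real.log_nonneg hb.le)
  have hbs : (b : ℝ≥0∞) ^ s = m := by
    have : b ^ s = m := NNReal.eq <| by
      rw [NNReal.coe_rpow, hs, Real.log_div_log]
      exact Real.rpow_logb hb0 (by exact_mod_cast hb.ne') (by positivity)
    rw [← ENNReal.coe_rpow_of_nonneg _ hs0, this, ENNReal.coe_natCast]
  obtain ⟨n, hnr, hrn⟩ :=
    exists_nat_pow_near_of_lt_one hr hr1 (inv_pos.2 hb0) (inv_lt_one_of_one_lt₀ hb)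
  have hbr : (b : ℝ≥0∞) ^ n ≤ (r : ℝ≥0∞)⁻¹ := by
    rw [← ENNReal.coe_inv hr.ne', ← ENNReal.coe_pow, ENNReal.coe_le_coe]
    exact le_inv_of_le_inv₀ hr (by rwa [← inv_pow])
  calc (externalCoveringNumber r A : ℝ≥0∞)
      ≤ m ^ (n + 1) := by exact_mod_cast (externalCoveringNumber_anti hnr.le).trans (hA (n + 1))
    _ = m * ((b : ℝ≥0∞) ^ n) ^ s := by
      rw [pow_succ', ← ENNReal.rpow_natCast_mul, mul_comm (n : ℝ), ENNReal.rpow_mul_natCast, hbs]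
    _ ≤ m * (r : ℝ≥0∞)⁻¹ ^ s := by gcongr
    _ = (m : ℝ≥0) * (r : ℝ≥0∞) ^ (-s) := by
      rw [ENNReal.inv_rpow, ENNReal.rpow_neg, ENNReal.coe_natCast]

theorem HasCoveringGrowth.ne_zero {K : ℝ≥0} {s : ℝ} (hA : HasCoveringGrowth A K s)
    (hne : A.Nonempty) : K ≠ 0 := by
  rintro rfl
  have := hA one_pos le_rfl
  simp [hne.ne_empty] at this

end CoveringGrowth

section Sumset

variable {V : Type*} [SeminormedAddCommGroup V]

theorem isCover_add {ε δ : ℝ≥0} {A B C D : Set V} (hA : IsCover ε A C) (hB : IsCover δ B D) :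
    IsCover (ε + δ) (A + B) (C + D) := by
  rintro _ ⟨a, ha, b, hb, rfl⟩
  obtain ⟨c, hc, hac⟩ := hA ha
  obtain ⟨d, hd, hbd⟩ := hB hb
  refine ⟨c + d, Set.add_mem_add hc hd, ?_⟩
  exact (edist_add_add_le a b c d).trans (by push_cast; exact add_le_add hac hbd)

theorem externalCoveringNumber_add_le (ε δ : ℝ≥0) (A B : Set V) :
    externalCoveringNumber (ε + δ) (A + B) ≤
      externalCoveringNumber ε A * externalCoveringNumber δ B := by
  obtain ⟨C, hC, hcardC⟩ := exists_isCover_encard_eq_externalCoveringNumber ε A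
  obtain ⟨D, hD, hcardD⟩ := exists_isCover_encard_eq_externalCoveringNumber δ B
  calc externalCoveringNumber (ε + δ) (A + B)
      ≤ (C + D).encard := (isCover_add hC hD).externalCoveringNumber_le_encard
    _ ≤ (C ×ˢ D).encard := by
      rw [← Set.image2_add, ← Set.image_uncurry_prod]
      exact Set.encard_image_le _ _
    _ = externalCoveringNumber ε A * externalCoveringNumber δ B := by
      rw [Set.encard_prod, hcardC, hcardD]

end Sumset

/-- The outer measure `S ↦ μ (A + S)`, whose comparison with Hausdorff measure turns bounds on
sumsets with sets of small diameter into bounds on arbitrary sumsets. -/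
noncomputable def sumsetOuterMeasure {G : Type*} [Add G] [MeasurableSpace G]
    (μ : Measure G) (A : Set G) : OuterMeasure G where
  measureOf S := μ (A + S)
  empty := by rw [Set.add_empty, measure_empty]
  mono h := measure_mono (Set.add_subset_add_left h)
  iUnion_nat S _ := by
    rw [Set.add_iUnion]
    exact measure_iUnion_le _

theorem measure_le_externalCoveringNumber_mul {G : Type*} [NormedAddCommGroup G]
    [MeasurableSpace G] [BorelSpace G] (μ : Measure G) [μ.IsAddHaarMeasure] {ε : ℝ≥0} (hε : 0 < ε)
    (A : Set G) : μ A ≤ externalCoveringNumber ε A * μ (closedBall 0 ε) := by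
  obtain ⟨C, hC, hcard⟩ := exists_isCover_encard_eq_externalCoveringNumber ε A
  rw [← hcard]
  rcases C.finite_or_infinite with hfin | hinf
  · calc μ A ≤ μ (⋃ c ∈ C, closedBall c ε) :=
        measure_mono (isCover_iff_subset_iUnion_closedBall.1 hC)
      _ ≤ ∑' c : C, μ (closedBall (c : G) ε) := measure_biUnion_le μ hfin.countable _
      _ = C.encard * μ (closedBall 0 ε) := by
        simp_rw [Measure.addHaar_closedBall_center μ]
        exact ENNReal.tsum_set_const C _
  · have hball : μ (closedBall 0 ε) ≠ 0 := (measure_closedBall_pos μ 0 hε).ne'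
    rw [hinf.encard_eq, ENat.toENNReal_top, ENNReal.top_mul hball]
    exact le_top

section Haar

variable {V : Type*} [NormedAddCommGroup V] [NormedSpace ℝ V] [FiniteDimensional ℝ V]
  [MeasurableSpace V] [BorelSpace V] (μ : Measure V) [μ.IsAddHaarMeasure]
  {A S : Set V} {K : ℝ≥0} {s : ℝ}

namespace HasCoveringGrowth

theorem measure_add_le_rpow (hA : HasCoveringGrowth A K s) {r : ℝ≥0} (hr : 0 < r) (hr1 : r ≤ 1)
    (hS : ediam S ≤ r) :
    μ (A + S) ≤ K * μ (closedBall 0 2) * (r : ℝ≥0∞) ^ (finrank ℝ V - s : ℝ) := by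
  have hcover : (externalCoveringNumber (r + r) (A + S) : ℝ≥0∞) ≤ externalCoveringNumber r A := by
    have hle := externalCoveringNumber_add_le r r A S
    grw [externalCoveringNumber_le_one_of_ediam_le hS, mul_one] at hle
    exact_mod_cast hle
  have hball : μ (closedBall 0 (r + r : ℝ≥0)) = (r : ℝ≥0∞) ^ finrank ℝ V * μ (closedBall 0 2) := by
    rw [← mul_two, NNReal.coe_mul, NNReal.coe_two,
      μ.addHaar_closedBall_mul 0 r.coe_nonneg zero_le_two, ENNReal.ofReal_pow r.coe_nonneg,
      ENNReal.ofReal_coe_nnreal]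
  calc μ (A + S)
      ≤ externalCoveringNumber (r + r) (A + S) * μ (closedBall 0 (r + r : ℝ≥0)) :=
        measure_le_externalCoveringNumber_mul μ (by positivity) _
    _ ≤ K * (r : ℝ≥0∞) ^ (-s) * ((r : ℝ≥0∞) ^ finrank ℝ V * μ (closedBall 0 2)) := by
        grw [hcover, hA hr hr1, hball]
    _ = K * μ (closedBall 0 2) * (r : ℝ≥0∞) ^ (finrank ℝ V - s : ℝ) := by
        rw [sub_eq_add_neg, ENNReal.rpow_add _ _ (by simpa using hr.ne') ENNReal.coe_ne_top,
          ENNReal.rpow_natCast]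
        ring

theorem measure_add_le_ediam_rpow (hA : HasCoveringGrowth A K s) (hS : ediam S < 1) :
    μ (A + S) ≤ K * μ (closedBall 0 2) * ediam S ^ (finrank ℝ V - s : ℝ) := by
  have hlim : Tendsto (fun r : ℝ≥0∞ ↦ K * μ (closedBall 0 2) * r ^ (finrank ℝ V - s : ℝ))
      (𝓝[>] ediam S) (𝓝 (K * μ (closedBall 0 2) * ediam S ^ (finrank ℝ V - s : ℝ))) := by
    refine (ENNReal.Tendsto.const_mul ?_ (.inr ?_)).mono_left nhdsWithin_le_nhds
    · exact ENNReal.continuous_rpow_const.tendsto _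
    · exact ENNReal.mul_ne_top ENNReal.coe_ne_top measure_closedBall_lt_top.ne
  -- Letting `r` decrease to `ediam S` treats the case `ediam S = 0` together with the others.
  have := nhdsGT_neBot_of_exists_gt ⟨1, hS⟩
  refine ge_of_tendsto hlim ?_
  filter_upwards [Ioo_mem_nhdsGT hS] with r ⟨hSr, hr1⟩
  lift r to ℝ≥0 using hr1.ne_top
  exact hA.measure_add_le_rpow μ (by simpa using hSr.bot_lt) (by exact_mod_cast hr1.le) hSr.le

theorem measure_add_le_hausdorffMeasure (hA : HasCoveringGrowth A K s) (E : Set V) :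
    μ (A + E) ≤ K * μ (closedBall 0 2) * μH[finrank ℝ V - s] E := by
  rcases A.eq_empty_or_nonempty with rfl | hne
  · simp
  set c := K * μ (closedBall (0 : V) 2)
  have hc0 : c ≠ 0 := mul_ne_zero (by simpa using hA.ne_zero hne)
    (measure_closedBall_pos μ 0 two_pos).ne'
  have hctop : c ≠ ∞ := ENNReal.mul_ne_top ENNReal.coe_ne_top measure_closedBall_lt_top.ne
  have hle : sumsetOuterMeasure μ A ≤
      OuterMeasure.mkMetric (c • fun r : ℝ≥0∞ ↦ r ^ (finrank ℝ V - s : ℝ)) :=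
    OuterMeasure.le_mkMetric _ _ 2⁻¹ (by simp) fun S hS ↦
      hA.measure_add_le_ediam_rpow μ (hS.trans_lt ENNReal.one_half_lt_one)
  rw [OuterMeasure.mkMetric_smul _ hctop hc0] at hle
  rw [Measure.hausdorffMeasure, ← OuterMeasure.coe_mkMetric]
  exact hle E

theorem sub_le_dimH_of_measure_add_ne_zero (hA : HasCoveringGrowth A K s) {E : Set V}
    (hE : μ (A + E) ≠ 0) : ENNReal.ofReal (finrank ℝ V - s) ≤ dimH E := by
  rcases le_total (finrank ℝ V - s : ℝ) 0 with hneg | hpos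
  · simp [ENNReal.ofReal_of_nonpos hneg]
  refine le_dimH_of_hausdorffMeasure_ne_zero fun hzero ↦ hE ?_
  rw [Real.coe_toNNReal _ hpos] at hzero
  simpa [hzero] using hA.measure_add_le_hausdorffMeasure μ E

end HasCoveringGrowth

end Haar

theorem ternaryCantorSet_eq_cantorSet : ternaryCantorSet = cantorSet := by
  rw [cantorSet_eq_zero_two_ofDigits]
  ext x
  constructor
  · rintro ⟨a, ha, rfl⟩
    refine ⟨fun n ↦ if a n = 0 then 0 else 2, fun n ↦ by grind, tsum_congr fun n ↦ ?_⟩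
    rcases ha n with h | h <;> simp [Real.ofDigitsTerm, h, div_eq_mul_inv]
  · rintro ⟨a, ha, rfl⟩
    refine ⟨fun n ↦ (a n : ℕ), fun n ↦ ?_, tsum_congr fun n ↦ ?_⟩
    · have hdigit : a n = 0 ∨ a n = 2 := by grind
      rcases hdigit with h | h <;> simp [h]
    · simp [Real.ofDigitsTerm, div_eq_mul_inv]

theorem externalCoveringNumber_preCantorSet_le (n : ℕ) :
    externalCoveringNumber (3⁻¹ ^ n) (preCantorSet n) ≤ 2 ^ n := by
  induction n with
  | zero =>
    simpa using externalCoveringNumber_le_one_of_ediam_le (ε := 1) (by simp [Real.ediam_Icc])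
  | succ n ih =>
    have hleft : LipschitzWith 3⁻¹ fun x : ℝ ↦ x / 3 :=
      .of_dist_le_mul fun x y ↦ by
        simp [Real.dist_eq, div_eq_inv_mul, ← mul_sub, abs_mul]
    have hright : LipschitzWith 3⁻¹ fun x : ℝ ↦ (2 + x) / 3 :=
      .of_dist_le_mul fun x y ↦ by
        simp [Real.dist_eq, div_eq_inv_mul, ← mul_sub, abs_mul]
    rw [preCantorSet_succ, pow_succ', pow_succ, mul_two]
    grw [externalCoveringNumber_union_le, externalCoveringNumber_image_le hleft,
      externalCoveringNumber_image_le hright, ih]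

theorem hasCoveringGrowth_cantorSet :
    HasCoveringGrowth cantorSet 2 (Real.log 2 / Real.log 3) := by
  have hcover (n : ℕ) : externalCoveringNumber (3⁻¹ ^ n) cantorSet ≤ (2 : ℕ) ^ n :=
    (externalCoveringNumber_mono_set (Set.iInter_subset preCantorSet n)).trans
      (externalCoveringNumber_preCantorSet_le n)
  simpa using hasCoveringGrowth_of_forall_pow two_ne_zero (by norm_num) hcover

theorem dimH_lower_of_sumset_general (E : Set ℝ) (hE : volume (ternaryCantorSet + E) ≠ 0) :
    ENNReal.ofReal (1 - Real.log 2 / Real.log 3) ≤ dimH E := by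
  rw [ternaryCantorSet_eq_cantorSet] at hE
  simpa using hasCoveringGrowth_cantorSet.sub_le_dimH_of_measure_add_ne_zero volume hE

/-- If `𝒞 + E ⊇ [0,2]` then `dim_H E ≥ 1 − log 2 / log 3`. -/
theorem dimH_lower_of_sumset (E : Set ℝ) (hE : Set.Icc (0 : ℝ) 2 ⊆ ternaryCantorSet + E) :
    ENNReal.ofReal (1 - Real.log 2 / Real.log 3) ≤ dimH E :=
  dimH_lower_of_sumset_general E fun h ↦ by simpa using measure_mono_null hE h
end

section
/- Let A be a set of positive integers having density D ∈ [0,1], i.e., lim_{n→∞} |A ∩ {1,…,n}|/n = D. Then the Hausdorff dimension of 𝒞_{Ā} is at least (1 − D) · log 2/log 3, where Ā denotes the complement of A in the positive integers. -/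
open Filter

/-- `𝒞_A`: reals `∑_{n≥1} aₙ 3⁻ⁿ` where each `aₙ ∈ {0,2}` and `aₙ = 2` only
for positions `n ∈ A`. -/
def cantorSetRestricted (A : Set ℕ) : Set ℝ :=
  {x | ∃ a : ℕ → ℝ, (∀ n, a n = 0 ∨ a n = 2) ∧ (∀ n, a n = 2 → (n + 1) ∈ A) ∧
    x = ∑' n : ℕ, a n / 3 ^ (n + 1)}

/-!
Read the digits of a point of `𝒞_B` at the positions in `B`, with `2` replaced by `1`, as a binary
expansion: this maps `𝒞_B` onto `[0, 1]`. Two points whose ternary digits first differ at position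
`n` are at distance at least `3⁻ⁿ`, because the digit `1` is missing, while their images are at
distance at most `2 ^ (-|B ∩ [1, n)|)`. If `|B ∩ [1, n]| ≥ s n` for large `n`, the map is therefore
Hölder of exponent `s log 2 / log 3`, which bounds `dim_H 𝒞_B` below by that exponent. The argument
works in any base, for any set of admissible digits no two of which are adjacent.
-/

open Function Real
open scoped NNReal Topology

theorem dimH_image_le_of_edist_le_rpow {α X Y : Type*} [EMetricSpace X] [EMetricSpace Y]
    {f : α → X} {g : α → Y} {S : Set α} {C r : ℝ≥0} (hr : 0 < r)
    (hfg : ∀ x ∈ S, ∀ y ∈ S, edist (f x) (f y) ≤ C * edist (g x) (g y) ^ (r : ℝ)) :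
    dimH (f '' S) ≤ dimH (g '' S) / r := by
  rcases isEmpty_or_nonempty α with hα | hα
  · simp [Set.eq_empty_of_isEmpty S]
  set h : Y → X := f ∘ invFunOn g S
  have h_apply : ∀ x ∈ S, h (g x) = f x := fun x hx => by
    have hgx : g x ∈ g '' S := Set.mem_image_of_mem g hx
    have hle := hfg _ (invFunOn_mem hgx) x hx
    rw [invFunOn_eq hgx, edist_self, ENNReal.zero_rpow_of_pos (mod_cast hr), mul_zero] at hle
    exact edist_le_zero.1 hle
  have h_image : h '' (g '' S) = f '' S := by
    rw [Set.image_image]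
    exact Set.image_congr h_apply
  have h_holder : HolderOnWith C r h (g '' S) := by
    rintro _ ⟨x, hx, rfl⟩ _ ⟨y, hy, rfl⟩
    rw [h_apply x hx, h_apply y hy]
    exact hfg x hx y hy
  exact h_image ▸ h_holder.dimH_image_le hr

theorem inv_pow_le_ofDigits_sub_ofDigits {b n : ℕ} {d e : ℕ → Fin b}
    (h_eq : ∀ i < n, d i = e i) (h_gap : (e n : ℕ) + 2 ≤ d n) :
    ((b : ℝ) ^ (n + 1))⁻¹ ≤ ofDigits d - ofDigits e := by
  have h_sum : ∑ i ∈ Finset.range n, ofDigitsTerm d i = ∑ i ∈ Finset.range n, ofDigitsTerm e i :=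
    Finset.sum_congr rfl fun i hi => by simp only [ofDigitsTerm, h_eq i (Finset.mem_range.1 hi)]
  have h_tail_d := ofDigits_nonneg fun i => d (i + (n + 1))
  have h_tail_e := ofDigits_le_one fun i => e (i + (n + 1))
  have h_gap' : (e n : ℝ) + 2 ≤ d n := mod_cast h_gap
  have h_coeff : 1 ≤ (d n - e n : ℝ)
      + ofDigits (fun i => d (i + (n + 1))) - ofDigits (fun i => e (i + (n + 1))) := by linarith
  calc ((b : ℝ) ^ (n + 1))⁻¹
      ≤ ((b : ℝ) ^ (n + 1))⁻¹ * ((d n - e n : ℝ)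
        + ofDigits (fun i => d (i + (n + 1))) - ofDigits (fun i => e (i + (n + 1)))) :=
        le_mul_of_one_le_right (by positivity) h_coeff
    _ = ofDigits d - ofDigits e := by
        rw [ofDigits_eq_sum_add_ofDigits d (n + 1), ofDigits_eq_sum_add_ofDigits e (n + 1),
          Finset.sum_range_succ, Finset.sum_range_succ, h_sum, ofDigitsTerm, ofDigitsTerm]
        ring

section Counting

variable {p : ℕ → Prop} [DecidablePred p] {s : ℝ}

theorem infinite_of_eventually_mul_le_count (hs : 0 < s)
    (hp : ∀ᶠ n : ℕ in atTop, s * n ≤ Nat.count p n) : {n | p n}.Infinite := by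
  intro hfin
  obtain ⟨n, h_le, h_gt⟩ := (hp.and <| (tendsto_natCast_atTop_atTop.const_mul_atTop
    hs).eventually_gt_atTop (hfin.toFinset.card : ℝ)).exists
  have h_card : (Nat.count p n : ℝ) ≤ hfin.toFinset.card := mod_cast Nat.count_le_card hfin n
  linarith

theorem exists_inv_pow_count_le {m b : ℕ} (hm : 1 ≤ m) (hb : 1 < b)
    (hp : ∀ᶠ n : ℕ in atTop, s * n ≤ Nat.count p n) :
    ∃ C : ℝ≥0, ∀ n, ((m : ℝ) ^ Nat.count p n)⁻¹ ≤
      C * (((b : ℝ) ^ (n + 1))⁻¹) ^ (s * logb b m) := by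
  have hb0 : (0 : ℝ) < b := by positivity
  have hb1 : (1 : ℝ) < b := mod_cast hb
  have hm1 : (1 : ℝ) ≤ m := mod_cast hm
  have hm0 : (0 : ℝ) < m := by positivity
  have h_isBigO : (fun n => ((m : ℝ) ^ Nat.count p n)⁻¹) =O[atTop]
      fun n : ℕ => ((m : ℝ) ^ (s * n))⁻¹ := by
    refine .of_bound 1 (hp.mono fun n hn => ?_)
    rw [one_mul, norm_of_nonneg (by positivity), norm_of_nonneg (by positivity), ← rpow_natCast]
    gcongr
  obtain ⟨K, hK, h_bound⟩ := Asymptotics.bound_of_isBigO_nat_atTop h_isBigO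
  have h_rpow (n : ℕ) : (((b : ℝ) ^ (n + 1))⁻¹) ^ (s * logb b m) =
      ((m : ℝ) ^ (s * n))⁻¹ * ((m : ℝ) ^ s)⁻¹ := by
    rw [← rpow_natCast, inv_rpow (by positivity), ← rpow_mul hb0.le,
      show ((n + 1 : ℕ) : ℝ) * (s * logb b m) = logb b m * (s * n + s) by push_cast; ring,
      rpow_mul hb0.le, rpow_logb hb0 hb1.ne' hm0, rpow_add hm0, mul_inv]
  refine ⟨(K * (m : ℝ) ^ s).toNNReal, fun n => ?_⟩
  have h := h_bound (x := n) (by positivity)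
  rw [norm_of_nonneg (by positivity), norm_of_nonneg (by positivity)] at h
  rw [h_rpow, coe_toNNReal _ (by positivity)]
  refine h.trans_eq ?_
  field_simp

end Counting

section DigitSet

variable {m b : ℕ}

/-- The reals `0.d₀d₁d₂…` in base `b` whose digits are `φ 0` at the positions not satisfying `p`
and arbitrary values of `φ` at the others. The parameter `ε` lists the indices of the digits, so
`ε n = 0` says that the `n`-th digit is `φ 0`. Positions start at `0`, so `𝒞_B` is the case
`φ = ![0, 2]`, `p n ↔ n + 1 ∈ B`. -/
def digitSet [NeZero m] (φ : Fin m → Fin b) (p : ℕ → Prop) : Set ℝ :=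
  (fun ε : ℕ → Fin m => ofDigits (φ ∘ ε)) '' {ε | support ε ⊆ {n | p n}}

/-- The digit map `φ` is increasing and no two of its values are equal or adjacent, so that
expansions with digits `φ i` are separated according to the first digit where they differ. -/
def IsGapped (φ : Fin m → Fin b) : Prop :=
  ∀ ⦃i j⦄, i < j → (φ i : ℕ) + 2 ≤ φ j

theorem IsGapped.one_lt_base {φ : Fin m → Fin b} (hφ : IsGapped φ) (hm : 1 < m) : 1 < b := by
  have h : (φ ⟨0, by lia⟩ : ℕ) + 2 ≤ φ ⟨1, hm⟩ := hφ (by simp)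
  lia

theorem IsGapped.inv_pow_le_abs_ofDigits_sub {φ : Fin m → Fin b} (hφ : IsGapped φ)
    {ε δ : ℕ → Fin m} (hne : ε ≠ δ) :
    ((b : ℝ) ^ (PiNat.firstDiff ε δ + 1))⁻¹ ≤ |ofDigits (φ ∘ ε) - ofDigits (φ ∘ δ)| := by
  wlog h_lt : δ (PiNat.firstDiff ε δ) < ε (PiNat.firstDiff ε δ) generalizing ε δ
  · rw [abs_sub_comm, PiNat.firstDiff_comm]
    refine this hne.symm ?_
    rw [PiNat.firstDiff_comm]
    exact lt_of_le_of_ne (not_lt.1 h_lt) (PiNat.apply_firstDiff_ne hne)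
  refine (inv_pow_le_ofDigits_sub_ofDigits (fun i hi => ?_) (hφ h_lt)).trans (le_abs_self _)
  exact congrArg φ (PiNat.apply_eq_of_lt_firstDiff hi)

theorem abs_ofDigits_comp_nth_sub_le (p : ℕ → Prop) [DecidablePred p] (ε δ : ℕ → Fin m) :
    |ofDigits (ε ∘ Nat.nth p) - ofDigits (δ ∘ Nat.nth p)| ≤
      ((m : ℝ) ^ Nat.count p (PiNat.firstDiff ε δ))⁻¹ :=
  abs_ofDigits_sub_ofDigits_le fun _ hi =>
    PiNat.apply_eq_of_lt_firstDiff (x := ε) (y := δ) (Nat.nth_lt_of_lt_count hi)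

theorem Icc_subset_image_ofDigits_comp_nth [NeZero m] (hm : 1 < m) {p : ℕ → Prop}
    (hp : {n | p n}.Infinite) :
    Set.Icc 0 1 ⊆
      (fun ε : ℕ → Fin m => ofDigits (ε ∘ Nat.nth p)) '' {ε | support ε ⊆ {n | p n}} := by
  classical
  intro y hy
  obtain ⟨d, -, rfl⟩ := ofDigits_SurjOn hm hy
  refine ⟨{n | p n}.indicator (d ∘ Nat.count p), Set.support_indicator_subset, ?_⟩
  have h_read : {n | p n}.indicator (d ∘ Nat.count p) ∘ Nat.nth p = d := by
    funext k
    rw [comp_apply, Set.indicator_of_mem (s := {n | p n}) (Nat.nth_mem_of_infinite hp k),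
      comp_apply, Nat.count_nth_of_infinite hp]
  exact congrArg ofDigits h_read

variable {φ : Fin m → Fin b} {p : ℕ → Prop} [DecidablePred p]

theorem IsGapped.exists_edist_ofDigits_comp_nth_le (hφ : IsGapped φ) (hm : 1 < m) {s : ℝ}
    (hs : 0 ≤ s) (hp : ∀ᶠ n : ℕ in atTop, s * n ≤ Nat.count p n) :
    ∃ C : ℝ≥0, ∀ ε δ : ℕ → Fin m,
      edist (ofDigits (ε ∘ Nat.nth p)) (ofDigits (δ ∘ Nat.nth p)) ≤
        C * edist (ofDigits (φ ∘ ε)) (ofDigits (φ ∘ δ)) ^ ((s * logb b m).toNNReal : ℝ) := by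
  have hb := hφ.one_lt_base hm
  have hr : 0 ≤ s * logb b m := mul_nonneg hs (logb_nonneg (mod_cast hb) (mod_cast hm.le))
  obtain ⟨C, hC⟩ := exists_inv_pow_count_le hm.le hb hp
  refine ⟨C, fun ε δ => ?_⟩
  rcases eq_or_ne ε δ with rfl | hne
  · simp
  have h_dist := calc
    |ofDigits (ε ∘ Nat.nth p) - ofDigits (δ ∘ Nat.nth p)|
      ≤ ((m : ℝ) ^ Nat.count p (PiNat.firstDiff ε δ))⁻¹ := abs_ofDigits_comp_nth_sub_le p ε δ
    _ ≤ C * (((b : ℝ) ^ (PiNat.firstDiff ε δ + 1))⁻¹) ^ (s * logb b m) := hC _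
    _ ≤ C * |ofDigits (φ ∘ ε) - ofDigits (φ ∘ δ)| ^ (s * logb b m) := by
        gcongr
        exact hφ.inv_pow_le_abs_ofDigits_sub hne
  rw [edist_dist, edist_dist, dist_eq, dist_eq, coe_toNNReal _ hr,
    ENNReal.ofReal_rpow_of_nonneg (abs_nonneg _) hr, ← ENNReal.ofReal_coe_nnreal,
    ← ENNReal.ofReal_mul C.coe_nonneg]
  exact ENNReal.ofReal_le_ofReal h_dist

variable [NeZero m]

theorem IsGapped.le_dimH_digitSet_of_eventually_mul_le_count (hφ : IsGapped φ) (hm : 1 < m)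
    {s : ℝ} (hs : 0 < s) (hp : ∀ᶠ n : ℕ in atTop, s * n ≤ Nat.count p n) :
    ENNReal.ofReal (s * logb b m) ≤ dimH (digitSet φ p) := by
  obtain ⟨C, hC⟩ := hφ.exists_edist_ofDigits_comp_nth_le hm hs.le hp
  have hr : 0 < s * logb b m :=
    mul_pos hs (logb_pos (mod_cast hφ.one_lt_base hm) (mod_cast hm))
  have h_dim : 1 ≤ dimH (digitSet φ p) / ENNReal.ofReal (s * logb b m) := calc
    1 = dimH (Set.Icc (0 : ℝ) 1) := by
      simp [dimH_of_nonempty_interior (s := Set.Icc (0 : ℝ) 1)]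
    _ ≤ _ := dimH_mono <|
      Icc_subset_image_ofDigits_comp_nth hm (infinite_of_eventually_mul_le_count hs hp)
    _ ≤ _ := dimH_image_le_of_edist_le_rpow (toNNReal_pos.2 hr) fun ε _ δ _ => hC ε δ
  rwa [ENNReal.le_div_iff_mul_le (.inl (ENNReal.ofReal_pos.2 hr).ne') (.inl ENNReal.ofReal_ne_top),
    one_mul] at h_dim

theorem IsGapped.liminf_count_div_mul_logb_le_dimH_digitSet (hφ : IsGapped φ) (hm : 1 < m) :
    ENNReal.ofReal (liminf (fun n : ℕ => (Nat.count p n : ℝ) / n) atTop * logb b m) ≤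
      dimH (digitSet φ p) := by
  have h_logb : 0 < logb b m := logb_pos (mod_cast hφ.one_lt_base hm) (mod_cast hm)
  refine ENNReal.le_of_forall_nnreal_lt fun r hr => ?_
  rcases eq_zero_or_pos r with rfl | hr0
  · simp
  rw [← ENNReal.ofReal_coe_nnreal, ENNReal.ofReal_lt_ofReal_iff_of_nonneg r.coe_nonneg,
    ← div_lt_iff₀ h_logb] at hr
  have h_bdd : atTop.IsBoundedUnder (· ≥ ·) fun n : ℕ => (Nat.count p n : ℝ) / n :=
    isBoundedUnder_of ⟨0, fun n => by positivity⟩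
  have h_count : ∀ᶠ n : ℕ in atTop, r / logb b m * n ≤ Nat.count p n := by
    filter_upwards [eventually_lt_of_lt_liminf hr h_bdd, eventually_gt_atTop 0] with n hn hn0
    exact ((lt_div_iff₀ (mod_cast hn0)).1 hn).le
  have h_dim := hφ.le_dimH_digitSet_of_eventually_mul_le_count hm (by positivity) h_count
  rwa [div_mul_cancel₀ _ h_logb.ne', ENNReal.ofReal_coe_nnreal] at h_dim

end DigitSet

theorem isGapped_zero_two : IsGapped (![0, 2] : Fin 2 → Fin 3) := by
  unfold IsGapped
  decide

theorem cantorSetRestricted_eq_digitSet (B : Set ℕ) :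
    cantorSetRestricted B = digitSet (![0, 2] : Fin 2 → Fin 3) (· + 1 ∈ B) := by
  classical
  ext x
  constructor
  · rintro ⟨a, ha, haB, rfl⟩
    refine ⟨fun n => if a n = 2 then 1 else 0, fun n hn => haB n ?_, ?_⟩
    · simpa using hn
    · refine tsum_congr fun n => ?_
      rcases ha n with h | h <;> simp [ofDigitsTerm, h, div_eq_mul_inv]
  · rintro ⟨ε, hε, rfl⟩
    refine ⟨fun n => 2 * (ε n : ℕ), fun n => ?_, fun n hn => hε ?_, tsum_congr fun n => ?_⟩
    · obtain h | h : ε n = 0 ∨ ε n = 1 := by lia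
      all_goals simp [h]
    · intro h
      simp [h] at hn
    · obtain h | h : ε n = 0 ∨ ε n = 1 := by lia
      all_goals simp [ofDigitsTerm, h, div_eq_mul_inv]

theorem ncard_inter_Icc_one_eq_count (B : Set ℕ) [DecidablePred (· + 1 ∈ B)] (n : ℕ) :
    (B ∩ Set.Icc 1 n).ncard = Nat.count (· + 1 ∈ B) n := by
  have h_image : B ∩ Set.Icc 1 n =
      (· + 1) '' ({k ∈ Finset.range n | k + 1 ∈ B} : Finset ℕ) := by
    ext k
    cases k <;> simp [and_comm]
  rw [h_image, Set.ncard_image_of_injective _ (add_left_injective 1), Set.ncard_coe_finset,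
    Nat.count_eq_card_filter_range]

theorem ncard_pos_compl_add_ncard_inter_Icc_one (A : Set ℕ) (n : ℕ) :
    ({k | 0 < k ∧ k ∉ A} ∩ Set.Icc 1 n).ncard + (A ∩ Set.Icc 1 n).ncard = n := by
  have h_diff : {k | 0 < k ∧ k ∉ A} ∩ Set.Icc 1 n = Set.Icc 1 n \ A := by
    ext k
    simp only [Set.mem_inter_iff, Set.mem_ofPred_eq, Set.mem_Icc, Set.mem_sdiff]
    grind
  rw [h_diff, Set.inter_comm, add_comm,
    Set.ncard_inter_add_ncard_sdiff_eq_ncard _ _ (Set.finite_Icc 1 n)]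
  simp

theorem tendsto_ncard_pos_compl_div {A : Set ℕ} {D : ℝ}
    (hA : Tendsto (fun n : ℕ => ((A ∩ Set.Icc 1 n).ncard : ℝ) / n) atTop (𝓝 D)) :
    Tendsto (fun n : ℕ => (({k | 0 < k ∧ k ∉ A} ∩ Set.Icc 1 n).ncard : ℝ) / n) atTop
      (𝓝 (1 - D)) := by
  refine (hA.const_sub 1).congr' ?_
  filter_upwards [eventually_ne_atTop 0] with n hn
  have h_add : (({k | 0 < k ∧ k ∉ A} ∩ Set.Icc 1 n).ncard : ℝ) + (A ∩ Set.Icc 1 n).ncard = n :=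
    mod_cast ncard_pos_compl_add_ncard_inter_Icc_one A n
  rw [one_sub_div (mod_cast hn), ← h_add, add_sub_cancel_right, h_add]

theorem dimH_cantorSetRestricted_compl_ge_general (B : Set ℕ) :
    ENNReal.ofReal (liminf (fun n : ℕ => ((B ∩ Set.Icc 1 n).ncard : ℝ) / n) atTop *
      Real.log 2 / Real.log 3) ≤ dimH (cantorSetRestricted B) := by
  classical
  have h := isGapped_zero_two.liminf_count_div_mul_logb_le_dimH_digitSet
    (p := (· + 1 ∈ B)) one_lt_two
  simpa only [← ncard_inter_Icc_one_eq_count, ← cantorSetRestricted_eq_digitSet, logb,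
    Nat.succ_eq_add_one, Nat.reduceAdd, Nat.cast_ofNat, mul_div_assoc] using h

/-- If a set `A` of positive integers has density `D ∈ [0,1]`, then
`dim_H 𝒞_{Ā} ≥ (1 − D) · log 2 / log 3`, where `Ā` is the complement of `A`
in the positive integers. -/
theorem dimH_cantorSetRestricted_compl_ge (A : Set ℕ) (hApos : ∀ a ∈ A, 0 < a)
    (D : ℝ) (hD : D ∈ Set.Icc (0 : ℝ) 1)
    (hdens : Tendsto (fun n : ℕ => ((A ∩ Set.Icc 1 n).ncard : ℝ) / n) atTop (nhds D)) :
    ENNReal.ofReal ((1 - D) * Real.log 2 / Real.log 3) ≤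
      dimH (cantorSetRestricted {m : ℕ | 0 < m ∧ m ∉ A}) := by
  rw [← (tendsto_ncard_pos_compl_div hdens).liminf_eq]
  exact dimH_cantorSetRestricted_compl_ge_general _
end
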